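/- Let k ≥ 2 and e ≥ 1 be integers. In the tensor product R(k,2^e−1) ⊗ R(k,2^e−1) over ZMod 2, the element (z_1·z_2·…·z_{k−1})^{2^{e+1}−1} · z_k^{2^{e+1}−2} is nonzero, where z_i = x_i ⊗ 1 + 1 ⊗ x_i. -/

import Mathlib

/-!
Write `q = 2 ^ e`, `m = q - 1` and `n = m + k`.

Let `B` be a commutative ring with `2 = 0` and let `u_1, …, u_k` and `v_1, …, v_k` be elements of
`B` whose `n`-th powers vanish. Put `Δ(u) = ∏_{i<j} (u_i + u_j)`. The identity
`(x + y) h_d(x, y, l) = h_{d+1}(x, l) + h_{d+1}(y, l)` shows by induction that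
`h_d(u_1, …, u_j) Δ(u_1, …, u_j)` lies in the ideal generated by the `u_i ^ (d + j - 1)`. For the
generators of the flag ideal the exponent is exactly `n`, so each of them annihilates `Δ(u)`
(`completeHomog_mul_vand`). Hence there is a ring homomorphism from `R(k,m) ⊗ R(k,m)` to
`B / Ann(Δ(u) Δ(v))` with `x_i ⊗ 1 ↦ u_i` and `1 ⊗ x_i ↦ v_i`, and it suffices to show that
`∏_{i<k} (u_i + v_i)^{2q-1} · (u_k + v_k)^{2q-2} · Δ(u) Δ(v)` is nonzero for one choice of `B`.

That product has the multiple `∏ u_i^{n-1} ∏ v_i^{n-1}` (`exists_multiplier`). By Frobenius,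
`(u + v)^{2q-1} = (u^q + v^q) (u + v)^{q-1}`, so `u^{n-1-q} v^{n-q} (u + v)^{2q-1}` equals
`u^{n-1} v^{n-1}`; and `u^{n-1} ∏ (u + c) = u^{n-1} ∏ c`. So the first pair of variables can be
split off at the cost of one more factor `∏ u_i ∏ v_i` in the remaining variables. The recursion
stops at two pairs of variables, where the product is computed directly.

Finally, `∏ u_i^{n-1} ∏ v_i^{n-1}` is nonzero in the truncated polynomial ring
`(ZMod 2)[u, v] / (u_i^n, v_i^n)`.
-/

open scoped TensorProduct

/-- Complete homogeneous symmetric polynomial of degree `d` in a list of elements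
of a commutative (semi)ring: `h_d(l)`. -/
noncomputable def completeHomog {R : Type*} [CommSemiring R] : List R → ℕ → R
  | [], 0 => 1
  | [], _ + 1 => 0
  | x :: l, d => ∑ t ∈ Finset.range (d + 1), x ^ t * completeHomog l (d - t)

/-- Elementary symmetric polynomial of degree `d` in a list of elements: `e_d(l)`. -/
noncomputable def elemSymm {R : Type*} [CommSemiring R] : List R → ℕ → R
  | _, 0 => 1
  | [], _ + 1 => 0
  | x :: l, d + 1 => elemSymm l (d + 1) + x * elemSymm l d

/-- The ideal of `(ZMod 2)[x_1, …, x_k]` generated by the complete homogeneous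
symmetric polynomials `h_{m+i}(x_1, …, x_{k+1-i})` for `1 ≤ i ≤ k`. -/
noncomputable def flagIdeal (k m : ℕ) : Ideal (MvPolynomial (Fin k) (ZMod 2)) :=
  Ideal.span { p | ∃ i : ℕ, 1 ≤ i ∧ i ≤ k ∧
    p = completeHomog (((List.finRange k).take (k + 1 - i)).map MvPolynomial.X) (m + i) }

/-- `R(k,m)`, the quotient of `(ZMod 2)[x_1, …, x_k]` by `flagIdeal k m`;
this is the mod-2 cohomology ring of the real flag manifold `F(1^k, m)`. -/
abbrev FlagRing (k m : ℕ) : Type :=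
  MvPolynomial (Fin k) (ZMod 2) ⧸ flagIdeal k m

/-- The image of the variable `x_{j+1}` in `R(k,m)` (`j` is 0-indexed). -/
noncomputable def xGen (k m : ℕ) (j : Fin k) : FlagRing k m :=
  Ideal.Quotient.mk (flagIdeal k m) (MvPolynomial.X j)

/-- The zero-divisor `z_{j+1} = x_{j+1} ⊗ 1 + 1 ⊗ x_{j+1}` in `R(k,m) ⊗ R(k,m)`. -/
noncomputable def zGen (k m : ℕ) (j : Fin k) :
    FlagRing k m ⊗[ZMod 2] FlagRing k m :=
  xGen k m j ⊗ₜ 1 + 1 ⊗ₜ xGen k m j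

/-- `x_{i+1,j+1}` in the `s`-fold tensor power `R(k,m)^{⊗ s}`: the element having
`x_{j+1}` in the `(i+1)`-st tensor factor and `1` elsewhere (`i`, `j` 0-indexed). -/
noncomputable def xT (k m s : ℕ) (i : Fin s) (j : Fin k) :
    ⨂[ZMod 2] _ : Fin s, FlagRing k m :=
  PiTensorProduct.tprod (ZMod 2) (fun t => if t = i then xGen k m j else 1)

/-- The `s`-th zero-divisor `z_{i+1,j+1} = x_{1,j+1} + x_{i+1,j+1}` in `R(k,m)^{⊗ s}`. -/
noncomputable def zT (k m s : ℕ) (hs : 0 < s) (i : Fin s) (j : Fin k) :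
    ⨂[ZMod 2] _ : Fin s, FlagRing k m :=
  xT k m s ⟨0, hs⟩ j + xT k m s i j

/-! ### Complete homogeneous polynomials and the Vandermonde product -/

section Vandermonde

variable {B : Type*} [CommRing B]

/-- The product of `a + b` over all pairs of entries of a list. In characteristic two this is the
Vandermonde product of the list. -/
def vand : List B → B
  | [] => 1
  | x :: l => (l.map (fun c => x + c)).prod * vand l

theorem completeHomog_zero (l : List B) : completeHomog l 0 = 1 := by
  induction l with
  | nil => rfl
  | cons x l ih => simp [completeHomog, ih]

theorem completeHomog_cons_succ (x : B) (l : List B) (d : ℕ) :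
    completeHomog (x :: l) (d + 1) = completeHomog l (d + 1) + x * completeHomog (x :: l) d := by
  simp only [completeHomog]
  rw [Finset.sum_range_succ', Finset.mul_sum, add_comm]
  simp [pow_succ', mul_assoc]

theorem map_completeHomog {C : Type*} [CommRing C] (f : B →+* C) (l : List B) (d : ℕ) :
    f (completeHomog l d) = completeHomog (l.map f) d := by
  induction l generalizing d with
  | nil => cases d <;> simp [completeHomog]
  | cons x l ih => simp [completeHomog, ih]

theorem add_mul_completeHomog (h2 : (2 : B) = 0) (x y : B) (l : List B) (d : ℕ) :
    (x + y) * completeHomog (x :: y :: l) d =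
      completeHomog (x :: l) (d + 1) + completeHomog (y :: l) (d + 1) := by
  induction d with
  | zero =>
    simp only [completeHomog_cons_succ, completeHomog_zero]
    linear_combination (-completeHomog l (0 + 1)) * h2
  | succ d ih =>
    rw [completeHomog_cons_succ x (y :: l) d, completeHomog_cons_succ x l (d + 1),
      completeHomog_cons_succ y l (d + 1)]
    linear_combination x * ih + (x * completeHomog (y :: l) (d + 1)
      - completeHomog l (d + 1 + 1)) * h2

/-- If the `(d + j - 1)`-st powers of the `j` entries of a list vanish, then `h_d` of the list
annihilates its Vandermonde product. -/
theorem completeHomog_mul_vand (h2 : (2 : B) = 0) (r : ℕ) (l : List B) (d : ℕ)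
    (hl : l.length = r + 1) (h : ∀ x ∈ l, x ^ (d + r) = 0) :
    completeHomog l d * vand l = 0 := by
  induction r generalizing l d with
  | zero =>
    obtain ⟨x, rfl⟩ := List.length_eq_one_iff.1 hl
    have hx : completeHomog [x] d = x ^ d := by
      clear h
      induction d with
      | zero => simp [completeHomog_zero]
      | succ d ih => rw [completeHomog_cons_succ, ih]; simp [completeHomog, pow_succ']
    have := h x (by simp)
    simp_all
  | succ r ih =>
    match l, hl, h with
    | x :: y :: l, hl, h =>
      have e1 := ih (x :: l) (d + 1) (by simpa using hl) (fun a ha => by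
        have := h a (by simp at ha ⊢; tauto)
        rwa [show d + 1 + r = d + (r + 1) by ring])
      have e2 := ih (y :: l) (d + 1) (by simpa using hl) (fun a ha => by
        have := h a (by simp at ha ⊢; tauto)
        rwa [show d + 1 + r = d + (r + 1) by ring])
      have e3 := add_mul_completeHomog h2 x y l d
      simp only [vand, List.map_cons, List.prod_cons] at e1 e2 ⊢
      linear_combination ((l.map (fun c => x + c)).prod * ((l.map (fun c => y + c)).prod
        * vand l)) * e3 + (l.map (fun c => y + c)).prod * e1 + (l.map (fun c => x + c)).prod * e2

theorem vand_take_dvd (l : List B) (j : ℕ) : vand (l.take j) ∣ vand l := by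
  induction l generalizing j with
  | nil => simp
  | cons x l ih =>
    cases j with
    | zero => simp [vand]
    | succ j =>
      simp only [List.take_succ_cons, vand]
      exact mul_dvd_mul ((List.take_sublist j l).map _).prod_dvd_prod (ih j)

/-! ### The product of the `z_i` in truncated rings -/

theorem add_pow_two_pow (h2 : (2 : B) = 0) (u v : B) (e : ℕ) :
    (u + v) ^ 2 ^ e = u ^ 2 ^ e + v ^ 2 ^ e := by
  induction e with
  | zero => simp
  | succ e ih =>
    rw [pow_succ 2 e, pow_mul, ih, pow_mul, pow_mul]
    linear_combination (u ^ 2 ^ e * v ^ 2 ^ e) * h2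

/-- A factor `u ^ a` with `u ^ (a + 1) = 0` turns `u + v` into `v`. -/
theorem pow_mul_add_pow {u : B} {a : ℕ} (hu : u ^ (a + 1) = 0) (v : B) (j : ℕ) :
    u ^ a * (u + v) ^ j = u ^ a * v ^ j := by
  induction j with
  | zero => simp
  | succ j ih =>
    rw [pow_succ, ← mul_assoc, ih]
    linear_combination v ^ j * hu

theorem pow_mul_prod_add {u : B} {a : ℕ} (hu : u ^ (a + 1) = 0) (l : List B) :
    u ^ a * (l.map (fun c => u + c)).prod = u ^ a * l.prod := by
  induction l with
  | nil => simp
  | cons c l ih =>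
    simp only [List.map_cons, List.prod_cons]
    linear_combination (u + c) * ih + l.prod * hu

theorem pow_mul_add_pow_top (h2 : (2 : B) = 0) {u v : B} {e c : ℕ}
    (hu : u ^ (2 ^ e + c + 1) = 0) (hv : v ^ (2 ^ e + c + 1) = 0) :
    u ^ c * v ^ (c + 1) * (u + v) ^ (2 ^ (e + 1) - 1) = u ^ (2 ^ e + c) * v ^ (2 ^ e + c) := by
  obtain ⟨p, hp⟩ : ∃ p, 2 ^ e = p + 1 := ⟨2 ^ e - 1, by have := Nat.one_le_two_pow (n := e); omega⟩
  have hF := add_pow_two_pow h2 u v e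
  have hk := pow_mul_add_pow hu v p
  rw [show 2 ^ (e + 1) - 1 = 2 ^ e + p by rw [pow_succ]; omega, pow_add _ (2 ^ e) p, hF]
  rw [hp] at hv hk ⊢
  linear_combination v ^ (c + 1) * hk + (u ^ c * (u + v) ^ p) * hv

/-- The product `∏ (u_i + v_i)` with every exponent `2 ^ (e + 1) - 1` except the last, which is
`2 ^ (e + 1) - 2`, over a list of pairs `(u_i, v_i)`. -/
def zProd (e : ℕ) : List (B × B) → B
  | [] => 1
  | [p] => (p.1 + p.2) ^ (2 ^ (e + 1) - 2)
  | p :: p' :: l => (p.1 + p.2) ^ (2 ^ (e + 1) - 1) * zProd e (p' :: l)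

/-- The case of two pairs of variables of `exists_multiplier`, where `n = 2 ^ e + s + 1` and the
multiplier is `x₂`. -/
theorem two_pairs (h2 : (2 : B) = 0) {e s : ℕ} (he : 1 ≤ e) {x₁ y₁ x₂ y₂ : B}
    (hx₁ : x₁ ^ (2 ^ e + s + 1) = 0) (hy₁ : y₁ ^ (2 ^ e + s + 1) = 0)
    (hx₂ : x₂ ^ (2 ^ e + s + 1) = 0) (hy₂ : y₂ ^ (2 ^ e + s + 1) = 0) :
    x₂ * ((x₁ * x₂) ^ s * (y₁ * y₂) ^ s *
      ((x₁ + y₁) ^ (2 ^ (e + 1) - 1) * (x₂ + y₂) ^ (2 ^ (e + 1) - 2)) *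
      ((x₁ + x₂) * (y₁ + y₂))) =
      (x₁ * x₂) ^ (2 ^ e + s) * (y₁ * y₂) ^ (2 ^ e + s) := by
  have hF₁ := add_pow_two_pow h2 x₁ y₁ e
  have hF₂ := add_pow_two_pow h2 x₂ y₂ e
  have htop := pow_mul_add_pow_top h2 hy₂ hx₂
  obtain ⟨p, hp⟩ : ∃ p, 2 ^ e = p + 2 := ⟨2 ^ e - 2, by
    have := Nat.pow_le_pow_right (n := 2) (by norm_num) he; omega⟩
  have hx := pow_mul_add_pow hx₁ y₁ (p + 1)
  have hy := pow_mul_add_pow hy₁ x₁ (p + 1)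
  have t1 : 2 ^ (e + 1) - 1 = 2 ^ e + (p + 1) := by rw [pow_succ]; omega
  have t2 : 2 ^ (e + 1) - 2 = 2 ^ e + p := by rw [pow_succ]; omega
  rw [t1] at htop
  rw [t1, t2]
  -- `x₁ ^ s * y₁ ^ s * (x₁ + y₁) ^ (2 q - 1)` has only its two middle terms.
  have a1 : x₁ ^ s * y₁ ^ s * (x₁ + y₁) ^ (2 ^ e + (p + 1)) =
      x₁ ^ (2 ^ e + s) * y₁ ^ (s + p + 1) + y₁ ^ (2 ^ e + s) * x₁ ^ (s + p + 1) := by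
    rw [pow_add _ (2 ^ e), hF₁]
    linear_combination y₁ ^ s * hx + x₁ ^ s * hy
  -- The degree in `x₂, y₂` exceeds `2 (n - 1)`.
  have a2 : x₂ ^ (s + 2) * y₂ ^ (s + 1) * (x₂ + y₂) ^ (2 ^ e + p) = 0 := by
    rw [pow_add _ (2 ^ e), hF₂]
    linear_combination (x₂ * y₂ ^ (s + 1) * (x₂ + y₂) ^ p) * hx₂
      + (x₂ ^ (s + 2) * (x₂ + y₂) ^ p) * hy₂
  have a3 : (x₁ ^ s * y₁ ^ s * (x₁ + y₁) ^ (2 ^ e + (p + 1))) * ((x₁ + x₂) * (y₁ + y₂)) =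
      x₁ ^ (2 ^ e + s) * y₁ ^ (2 ^ e + s) * (x₂ + y₂) +
      x₂ * y₂ * (x₁ ^ (2 ^ e + s) * y₁ ^ (s + p + 1) + y₁ ^ (2 ^ e + s) * x₁ ^ (s + p + 1)) := by
    rw [a1]
    rw [hp] at hx₁ hy₁ ⊢
    linear_combination (y₁ ^ (s + p + 1) * (y₁ + y₂)) * hx₁ + (x₁ ^ (s + p + 1) * (x₁ + x₂)) * hy₁
  linear_combination (x₂ ^ (s + 1) * y₂ ^ s * (x₂ + y₂) ^ (2 ^ e + p)) * a3
    + (x₁ ^ (2 ^ e + s) * y₁ ^ (2 ^ e + s)) * htop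
    + (x₁ ^ (2 ^ e + s) * y₁ ^ (s + p + 1) + y₁ ^ (2 ^ e + s) * x₁ ^ (s + p + 1)) * a2

/-- If the `n`-th powers of `r + 2` pairs of elements vanish, where `n = 2 ^ e + r + 1 + s`, then
`∏ u_i ^ (n - 1) ∏ v_i ^ (n - 1)` is a multiple of `zProd` times both Vandermonde products. The
parameter `s` makes room for the factors `∏ u_i ∏ v_i` that appear each time the first pair is
split off. -/
theorem exists_multiplier (h2 : (2 : B) = 0) {e : ℕ} (he : 1 ≤ e) (r s : ℕ) (l : List (B × B))
    (hl : l.length = r + 2) (h : ∀ p ∈ l, p.1 ^ (2 ^ e + r + s + 1) = 0 ∧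
      p.2 ^ (2 ^ e + r + s + 1) = 0) :
    ∃ w, w * ((l.map Prod.fst).prod ^ s * (l.map Prod.snd).prod ^ s * zProd e l *
      (vand (l.map Prod.fst) * vand (l.map Prod.snd))) =
      (l.map Prod.fst).prod ^ (2 ^ e + r + s) * (l.map Prod.snd).prod ^ (2 ^ e + r + s) := by
  induction r generalizing l s with
  | zero =>
    obtain ⟨⟨x₁, y₁⟩, ⟨x₂, y₂⟩, rfl⟩ := List.length_eq_two.1 hl
    simp only [add_zero, List.mem_cons, List.not_mem_nil, or_false, forall_eq_or_imp,
      forall_eq] at h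
    refine ⟨x₂, ?_⟩
    simpa [zProd, vand] using two_pairs h2 he h.1.1 h.1.2 h.2.1 h.2.2
  | succ r ih =>
    match l, hl, h with
    | (u, v) :: p :: l, hl, h =>
      rw [show 2 ^ e + (r + 1) + s = 2 ^ e + r + (s + 1) by ring] at *
      obtain ⟨w, hw⟩ := ih (s + 1) (p :: l) (by simpa using hl)
        (fun a ha => h a (List.mem_cons_of_mem _ ha))
      obtain ⟨hu, hv⟩ := h (u, v) (by simp)
      simp only at hu hv
      have hz := pow_mul_add_pow_top (c := r + s + 1) h2 (e := e) (u := u) (v := v)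
        (by rw [← hu]; ring_nf) (by rw [← hv]; ring_nf)
      have hU := pow_mul_prod_add hu ((p :: l).map Prod.fst)
      have hV := pow_mul_prod_add hv ((p :: l).map Prod.snd)
      refine ⟨w * u ^ (r + 1) * v ^ (r + 2), ?_⟩
      rw [show ((u, v) :: p :: l).map Prod.fst = u :: (p :: l).map Prod.fst from rfl,
        show ((u, v) :: p :: l).map Prod.snd = v :: (p :: l).map Prod.snd from rfl,
        List.prod_cons, List.prod_cons, zProd]
      simp only [vand]
      generalize (p :: l).map Prod.fst = L at *
      generalize (p :: l).map Prod.snd = M at *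
      generalize zProd e (p :: l) = Z at *
      generalize (L.map (fun c => u + c)).prod = PL at *
      generalize (M.map (fun c => v + c)).prod = PM at *
      generalize (u + v) ^ (2 ^ (e + 1) - 1) = Y at *
      rw [show 2 ^ e + (r + s + 1) = 2 ^ e + r + (s + 1) by ring] at hz
      simp only [mul_pow]
      generalize 2 ^ e + r + (s + 1) = N at *
      linear_combination
        (w * L.prod ^ s * M.prod ^ s * Z * PL * PM * vand L * vand M) * hz
        + (w * L.prod ^ s * M.prod ^ s * Z * vand L * vand M * v ^ N * PM) * hU
        + (w * L.prod ^ s * M.prod ^ s * Z * vand L * vand M * u ^ N * L.prod) * hV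
        + (u ^ N * v ^ N) * hw

end Vandermonde

theorem zProd_map_finRange {B : Type*} [CommRing B] (e k : ℕ) (u v : Fin (k + 1) → B) :
    zProd e ((List.finRange (k + 1)).map (fun i => (u i, v i))) =
      (∏ j : Fin k, (u j.castSucc + v j.castSucc)) ^ (2 ^ (e + 1) - 1) *
        (u (Fin.last k) + v (Fin.last k)) ^ (2 ^ (e + 1) - 2) := by
  induction k with
  | zero => simp [List.finRange_succ, zProd]
  | succ k ih =>
    have := ih (fun i => u i.succ) (fun i => v i.succ)
    rw [List.finRange_succ] at this ⊢
    rw [List.finRange_succ]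
    simp only [List.map_cons, List.map_map, Function.comp_def, zProd] at this ⊢
    rw [this, Fin.prod_univ_succ, mul_pow]
    simp [mul_assoc]

/-! ### The truncated polynomial ring -/

/-- The ideal generated by the `n`-th powers of the variables. -/
noncomputable def truncIdeal (σ : Type) (n : ℕ) : Ideal (MvPolynomial σ (ZMod 2)) :=
  Ideal.span ((fun s => MvPolynomial.monomial s (1 : ZMod 2)) ''
    Set.range (fun i : σ => Finsupp.single i n))

theorem X_pow_mem_truncIdeal {σ : Type} (n : ℕ) (i : σ) :
    (MvPolynomial.X i : MvPolynomial σ (ZMod 2)) ^ n ∈ truncIdeal σ n := by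
  rw [MvPolynomial.X_pow_eq_monomial]
  exact Ideal.subset_span ⟨_, ⟨i, rfl⟩, rfl⟩

theorem prod_X_pow_notMem_truncIdeal {σ : Type} [Fintype σ] (N : ℕ) :
    (∏ i : σ, (MvPolynomial.X i : MvPolynomial σ (ZMod 2))) ^ N ∉ truncIdeal σ (N + 1) := by
  classical
  have hmon : (∏ i : σ, (MvPolynomial.X i : MvPolynomial σ (ZMod 2))) ^ N =
      MvPolynomial.monomial (∑ i : σ, Finsupp.single i N) 1 := by
    rw [MvPolynomial.monomial_sum_one, ← Finset.prod_pow]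
    simp [MvPolynomial.X_pow_eq_monomial]
  rw [hmon, truncIdeal, MvPolynomial.mem_ideal_span_monomial_image]
  intro h
  obtain ⟨_, ⟨i, rfl⟩, hi⟩ := h (∑ i : σ, Finsupp.single i N) (by
    simp [MvPolynomial.mem_support_iff, MvPolynomial.coeff_monomial])
  have := hi i
  simp [Finsupp.finsetSum_apply, Finsupp.single_apply] at this

/-! ### Mapping the flag ring -/

/-- A homomorphism `R(k,m) → C` sending `x_i` to `π (u_i)`, where `π : B → C` kills everything
that annihilates the Vandermonde product of `u`. -/
theorem exists_flagRing_hom {B C : Type} [CommRing B] [Algebra (ZMod 2) B] [CommRing C]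
    [Algebra (ZMod 2) C] (h2 : (2 : B) = 0) (k m : ℕ) (u : Fin k → B)
    (hu : ∀ i, u i ^ (m + k) = 0) (π : B →ₐ[ZMod 2] C)
    (hπ : ∀ b, b * vand ((List.finRange k).map u) = 0 → π b = 0) :
    ∃ f : FlagRing k m →ₐ[ZMod 2] C, ∀ i, f (xGen k m i) = π (u i) := by
  let g : MvPolynomial (Fin k) (ZMod 2) →ₐ[ZMod 2] B := MvPolynomial.aeval u
  have hle : flagIdeal k m ≤ RingHom.ker (π.comp g) := by
    refine Ideal.span_le.2 ?_
    rintro _ ⟨i, hi1, hik, rfl⟩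
    refine hπ _ ?_
    have hmap : g (completeHomog (((List.finRange k).take (k + 1 - i)).map MvPolynomial.X)
        (m + i)) = completeHomog (((List.finRange k).map u).take (k + 1 - i)) (m + i) := by
      have := map_completeHomog (g : MvPolynomial (Fin k) (ZMod 2) →+* B)
        (((List.finRange k).take (k + 1 - i)).map MvPolynomial.X) (m + i)
      simpa [g, Function.comp_def, List.map_take] using this
    obtain ⟨c, hc⟩ := vand_take_dvd ((List.finRange k).map u) (k + 1 - i)
    have h0 := completeHomog_mul_vand h2 (k - i) (((List.finRange k).map u).take (k + 1 - i))
      (m + i) (by simp; omega) (fun x hx => by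
        obtain ⟨j, -, rfl⟩ := List.mem_map.1 (List.mem_of_mem_take hx)
        rw [show m + i + (k - i) = m + k by omega]
        exact hu j)
    change g (completeHomog _ _) * _ = 0
    rw [hmap, hc, ← mul_assoc, h0, zero_mul]
  refine ⟨Ideal.Quotient.liftₐ (flagIdeal k m) (π.comp g) (fun a ha => hle ha), fun i => ?_⟩
  change π (g (MvPolynomial.X i)) = _
  simp [g]

theorem exists_tensor_hom {B C : Type} [CommRing B] [Algebra (ZMod 2) B] [CommRing C]
    [Algebra (ZMod 2) C] (h2 : (2 : B) = 0) (k m : ℕ) (u v : Fin k → B)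
    (hu : ∀ i, u i ^ (m + k) = 0) (hv : ∀ i, v i ^ (m + k) = 0) (π : B →ₐ[ZMod 2] C)
    (hπ : ∀ b, b * (vand ((List.finRange k).map u) * vand ((List.finRange k).map v)) = 0 →
      π b = 0) :
    ∃ φ : FlagRing k m ⊗[ZMod 2] FlagRing k m →ₐ[ZMod 2] C,
      ∀ i, φ (zGen k m i) = π (u i + v i) := by
  obtain ⟨f, hf⟩ := exists_flagRing_hom h2 k m u hu π (fun b hb => hπ b (by
    rw [← mul_assoc, hb, zero_mul]))
  obtain ⟨g, hg⟩ := exists_flagRing_hom h2 k m v hv π (fun b hb => hπ b (by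
    rw [mul_left_comm, hb, mul_zero]))
  exact ⟨Algebra.TensorProduct.productMap f g, fun i => by simp [zGen, hf, hg]⟩

theorem map_prod_pow_mul_pow {S C : Type*} [CommRing S] [CommRing C] (φ : S →+* C) {ι : Type*}
    [Fintype ι] (z : ι → S) (y : S) (a b : ℕ) :
    φ ((∏ j, z j) ^ a * y ^ b) = (∏ j, φ (z j)) ^ a * φ y ^ b := by
  simp

/-- A vanishing product of the `z_i` in `R(k,m) ⊗ R(k,m)` yields a vanishing product in every ring
with elements `u_i, v_i` whose `(m + k)`-th powers vanish, after multiplication by the Vandermonde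
products. -/
theorem mul_vand_eq_zero {B : Type} [CommRing B] [Algebra (ZMod 2) B] (h2 : (2 : B) = 0)
    (k m a b : ℕ) (u v : Fin (k + 1) → B) (hu : ∀ i, u i ^ (m + (k + 1)) = 0)
    (hv : ∀ i, v i ^ (m + (k + 1)) = 0)
    (h : (∏ j : Fin k, zGen (k + 1) m j.castSucc) ^ a * zGen (k + 1) m (Fin.last k) ^ b = 0) :
    (∏ j : Fin k, (u j.castSucc + v j.castSucc)) ^ a * (u (Fin.last k) + v (Fin.last k)) ^ b *
      (vand ((List.finRange (k + 1)).map u) * vand ((List.finRange (k + 1)).map v)) = 0 := by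
  set D := vand ((List.finRange (k + 1)).map u) * vand ((List.finRange (k + 1)).map v) with hD
  have hmem : ∀ b, b ∈ (Ideal.span {D}).annihilator ↔ b * D = 0 := fun b => by
    rw [← smul_eq_mul]
    exact Submodule.mem_annihilator_span_singleton D b
  obtain ⟨φ, hφ⟩ := exists_tensor_hom h2 (k + 1) m u v hu hv
    (Ideal.Quotient.mkₐ (ZMod 2) (Ideal.span {D}).annihilator)
    (fun b hb => Ideal.Quotient.eq_zero_iff_mem.2 ((hmem b).2 hb))
  have himg := map_prod_pow_mul_pow φ.toRingHom (fun j : Fin k => zGen (k + 1) m j.castSucc)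
    (zGen (k + 1) m (Fin.last k)) a b
  rw [h, map_zero] at himg
  change 0 = (∏ j : Fin k, φ (zGen (k + 1) m j.castSucc)) ^ a *
    φ (zGen (k + 1) m (Fin.last k)) ^ b at himg
  simp only [hφ] at himg
  replace himg := himg.trans (map_prod_pow_mul_pow
    (Ideal.Quotient.mkₐ (ZMod 2) (Ideal.span {D}).annihilator).toRingHom
    (fun j : Fin k => u j.castSucc + v j.castSucc) (u (Fin.last k) + v (Fin.last k)) a b).symm
  replace himg := himg.symm
  exact (hmem _).1 (Ideal.Quotient.eq_zero_iff_mem.1 himg)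

/-- for `k ≥ 2` and `e ≥ 1`,
`(z_1 ⋯ z_{k-1})^{2^{e+1}-1} · z_k^{2^{e+1}-2} ≠ 0` in `R(k, 2^e-1) ⊗ R(k, 2^e-1)`. -/
theorem statement8 (k e : ℕ) (hk : 2 ≤ k) (he : 1 ≤ e) :
    (∏ j ∈ Finset.univ.filter (fun j : Fin k => j.val < k - 1),
        zGen k (2 ^ e - 1) j) ^ (2 ^ (e + 1) - 1) *
      zGen k (2 ^ e - 1) ⟨k - 1, by omega⟩ ^ (2 ^ (e + 1) - 2) ≠ 0 := by
  intro hzero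
  obtain ⟨r, rfl⟩ : ∃ r, k = r + 2 := ⟨k - 2, by omega⟩
  have hq := Nat.one_le_two_pow (n := e)
  -- The truncated polynomial ring, with `n = 2 ^ e + r + 1`.
  let σ := Fin (r + 2) ⊕ Fin (r + 2)
  let I := truncIdeal σ (2 ^ e + r + 1)
  let B := MvPolynomial σ (ZMod 2) ⧸ I
  let u : Fin (r + 2) → B := fun i => Ideal.Quotient.mk I (MvPolynomial.X (Sum.inl i))
  let v : Fin (r + 2) → B := fun i => Ideal.Quotient.mk I (MvPolynomial.X (Sum.inr i))
  have h2 : (2 : B) = 0 := by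
    have h := congrArg (algebraMap (ZMod 2) B) (show (2 : ZMod 2) = 0 from rfl)
    rwa [map_ofNat, map_zero] at h
  have hu : ∀ i, u i ^ (2 ^ e + r + 1) = 0 := fun i =>
    Ideal.Quotient.eq_zero_iff_mem.2 (X_pow_mem_truncIdeal _ _)
  have hv : ∀ i, v i ^ (2 ^ e + r + 1) = 0 := fun i =>
    Ideal.Quotient.eq_zero_iff_mem.2 (X_pow_mem_truncIdeal _ _)
  have hn : 2 ^ e - 1 + (r + 2) = 2 ^ e + r + 1 := by omega
  have hprod : (∏ j ∈ Finset.univ.filter (fun j : Fin (r + 2) => j.val < r + 2 - 1),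
      zGen (r + 2) (2 ^ e - 1) j) = ∏ j : Fin (r + 1), zGen (r + 2) (2 ^ e - 1) j.castSucc := by
    rw [Finset.prod_filter, Fin.prod_univ_castSucc]
    simp [Nat.lt_succ_iff.1 (Fin.is_lt _)]
  rw [hprod] at hzero
  have hvan := mul_vand_eq_zero h2 (r + 1) (2 ^ e - 1) _ _ u v
    (fun i => by rw [hn]; exact hu i) (fun i => by rw [hn]; exact hv i) hzero
  have hZ := zProd_map_finRange e (r + 1) u v
  obtain ⟨w, hw⟩ := exists_multiplier h2 he r 0
    ((List.finRange (r + 2)).map (fun i => (u i, v i))) (by simp) (by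
      intro p hp
      obtain ⟨i, -, rfl⟩ := List.mem_map.1 hp
      exact ⟨hu i, hv i⟩)
  rw [hZ] at hw
  simp only [List.map_map, Function.comp_def, pow_zero, one_mul, add_zero] at hw
  have htop : (∏ i, u i) ^ (2 ^ e + r) * (∏ i, v i) ^ (2 ^ e + r) = 0 := by
    rw [← List.prod_ofFn, ← List.prod_ofFn, List.ofFn_eq_map, List.ofFn_eq_map]
    rw [← hw, hvan, mul_zero]
  refine prod_X_pow_notMem_truncIdeal (σ := σ) (2 ^ e + r) ?_
  rw [← Ideal.Quotient.eq_zero_iff_mem, map_pow, map_prod, Fintype.prod_sum_type, mul_pow]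
  exact htop
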